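/- Let p be a discrete Markov model on [n_1]×⋯×[n_d] (d ≥ 3) such that the rank of the k-th unfolding matrix of p is r_k for each k = 1,…,d−1. Let B_1 : [n_1]×[r_1] → ℝ be any matrix with orthonormal columns spanning the column space of the pair-marginal matrix p(x_1;x_2); for 2 ≤ k ≤ d−1 let B_k : [n_{k−1}]×[n_k]×[r_k] → ℝ be any tensor whose columns (as a matrix with rows indexed by (x_{k−1},x_k) and columns by α_k) are orthonormal and span the column space of the triple-marginal matrix p((x_{k−1},x_k);x_{k+1}); and let B_d(x_{d−1},x_d) = p(x_{d−1},x_d) (the pair marginal). Define A_1 = B_1 and, for 2 ≤ k ≤ d−1, A_k(x_k,α_k) = Σ_{x_{k−1}=1}^{n_{k−1}} B_k(x_{k−1},x_k,α_k). Then each of the equations G_1 = B_1; Σ_{α_{k−1}=1}^{r_{k−1}} A_{k−1}(x_{k−1},α_{k−1}) G_k(α_{k−1},x_k,α_k) = B_k(x_{k−1},x_k,α_k) for k = 2,…,d−1; and Σ_{α_{d−1}=1}^{r_{d−1}} A_{d−1}(x_{d−1},α_{d−1}) G_d(α_{d−1},x_d) = p(x_{d−1},x_d), has a unique solution, and the solutions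 G_1,…,G_d satisfy p(x_1,…,x_d) = Σ_{α_1,…,α_{d−1}} G_1(x_1,α_1) G_2(α_1,x_2,α_2) ⋯ G_d(α_{d−1},x_d) for all x, i.e., they are cores of a tensor train representation of p of rank (r_1,…,r_{d−1}). -/

import Mathlib

open scoped BigOperators
open Matrix

/-- Indices `(x_0, …, x_{k-1})` of the first `k` variables (sizes given by `n`). -/
abbrev PreIdx (n : ℕ → ℕ) (k : ℕ) := ∀ i : Fin k, Fin (n i)

/-- Indices `(x_k, …, x_{d-1})` of the variables with position `≥ k`. -/
abbrev SufIdx (n : ℕ → ℕ) (d k : ℕ) := ∀ i : {i : Fin d // k ≤ (i : ℕ)}, Fin (n i)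

/-- Indices of the variables with position in the window `[a, b)`. -/
abbrev MidIdx (n : ℕ → ℕ) (d a b : ℕ) :=
  ∀ i : {i : Fin d // a ≤ (i : ℕ) ∧ (i : ℕ) < b}, Fin (n i)

/-- Glue a prefix index and a suffix index into a full index. -/
def glue {n : ℕ → ℕ} {d k : ℕ} (x : PreIdx n k) (y : SufIdx n d k) : PreIdx n d :=
  fun i => if h : (i : ℕ) < k then x ⟨i, h⟩ else y ⟨i, Nat.le_of_not_lt h⟩

/-- The `k`-th unfolding matrix of a `d`-dimensional tensor `p`. -/
def unfold {n : ℕ → ℕ} {d : ℕ} (p : PreIdx n d → ℝ) (k : ℕ) :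
    Matrix (PreIdx n k) (SufIdx n d k) ℝ :=
  Matrix.of fun x y => p (glue x y)

/-- Column space of a matrix: span of its columns. -/
noncomputable def colSpace {R C : Type*} (M : Matrix R C ℝ) : Submodule ℝ (R → ℝ) :=
  Submodule.span ℝ (Set.range fun c => fun r => M r c)

/-- Row space of a matrix: span of its rows. -/
noncomputable def rowSpace {R C : Type*} (M : Matrix R C ℝ) : Submodule ℝ (C → ℝ) :=
  Submodule.span ℝ (Set.range fun r => fun c => M r c)

/-- Rank of a matrix (dimension of its column space). -/
noncomputable def mrank {R C : Type*} (M : Matrix R C ℝ) : ℕ :=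
  Module.finrank ℝ ↥(colSpace M)

/-- Restriction of a prefix index to the first `k` variables. -/
def takePre {n : ℕ → ℕ} {k : ℕ} (x : PreIdx n (k + 1)) : PreIdx n k :=
  fun i => x ⟨i, Nat.lt_succ_of_lt i.isLt⟩

/-- Extend a prefix index by one more variable. -/
def snoc' {n : ℕ → ℕ} {k : ℕ} (z : PreIdx n k) (a : Fin (n k)) : PreIdx n (k + 1) :=
  fun i =>
    if h : (i : ℕ) < k then z ⟨i, h⟩
    else Fin.cast (congrArg n (by have := i.isLt; omega : k = (i : ℕ))) a

/-- A family of tensor-train cores: core `k` has shape `r k × n k × r (k+1)`.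
(The first and last cores carry a dummy index of size `r 0 = 1`, `r d = 1`.) -/
abbrev CoreType (n r : ℕ → ℕ) (d : ℕ) :=
  ∀ k : Fin d, Fin (r k) → Fin (n k) → Fin (r ((k : ℕ) + 1)) → ℝ

/-- Partial contraction of the first `k` cores. -/
noncomputable def ttPrefixF {d : ℕ} {n r : ℕ → ℕ} (G : CoreType n r d) :
    (k : ℕ) → k ≤ d → PreIdx n k → Fin (r 0) → Fin (r k) → ℝ
  | 0, _, _, a, b => if (a : ℕ) = (b : ℕ) then 1 else 0
  | k + 1, h, x, a, b =>
      ∑ c : Fin (r k),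
        ttPrefixF G k (Nat.le_of_succ_le h) (takePre x) a c * G ⟨k, h⟩ c (x (Fin.last k)) b

/-- Full contraction `G_1 ∘ ⋯ ∘ G_d` of a family of tensor-train cores. -/
noncomputable def ttContract {d : ℕ} {n r : ℕ → ℕ} (G : CoreType n r d)
    (x : PreIdx n d) : ℝ :=
  ∑ a : Fin (r 0), ∑ b : Fin (r d), ttPrefixF G d le_rfl x a b

/-- The recursively contracted left sketch functions `S_k` built from blocks `s_k`. -/
noncomputable def leftSketch {n m : ℕ → ℕ}
    (s : ∀ k : ℕ, Fin (m (k + 1)) → Fin (n k) → Fin (m k) → ℝ) :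
    (k : ℕ) → Fin (m k) → PreIdx n k → ℝ
  | 0, _, _ => 1
  | k + 1, β, x => ∑ c : Fin (m k), s k β (x (Fin.last k)) c * leftSketch s k c (takePre x)

/-- The right-sketched unfolding `Φ̄_k = p ∘ T_{k+1}`. -/
noncomputable def rightSketched {n : ℕ → ℕ} {d : ℕ} (p : PreIdx n d → ℝ)
    {ℓ : ℕ → ℕ} (T : ∀ k : ℕ, SufIdx n d k → Fin (ℓ k) → ℝ) (k : ℕ)
    (x : PreIdx n k) (γ : Fin (ℓ k)) : ℝ :=
  ∑ y : SufIdx n d k, p (glue x y) * T k y γ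

/-- The doubly sketched tensor `Φ̃_{j+1} = S_j ∘ Φ̄_{j+1}`. -/
noncomputable def tildePhi {n : ℕ → ℕ} {d : ℕ} {ℓ m : ℕ → ℕ} (p : PreIdx n d → ℝ)
    (T : ∀ k : ℕ, SufIdx n d k → Fin (ℓ k) → ℝ)
    (s : ∀ k : ℕ, Fin (m (k + 1)) → Fin (n k) → Fin (m k) → ℝ)
    (j : ℕ) (β : Fin (m j)) (xj : Fin (n j)) (γ : Fin (ℓ (j + 1))) : ℝ :=
  ∑ z : PreIdx n j, leftSketch s j β z * rightSketched p T (j + 1) (snoc' z xj) γ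

/-- Marginal of `p` on the window of variables `[a, b)`. -/
noncomputable def winMarg {n : ℕ → ℕ} {d : ℕ} (p : PreIdx n d → ℝ) (a b : ℕ)
    (y : MidIdx n d a b) : ℝ :=
  ∑ z : ∀ i : {i : Fin d // (i : ℕ) < a ∨ b ≤ (i : ℕ)}, Fin (n i),
    p fun i =>
      if h : a ≤ (i : ℕ) ∧ (i : ℕ) < b then y ⟨i, h⟩ else z ⟨i, by omega⟩

/-- Marginal of `p` on the window `[a, b)`, viewed as a matrix with rows indexed by
variables in `[a, c)` and columns by variables in `[c, b)`. -/
noncomputable def winMatrix {n : ℕ → ℕ} {d : ℕ} (p : PreIdx n d → ℝ) (a c b : ℕ) :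
    Matrix (MidIdx n d a c) (MidIdx n d c b) ℝ :=
  Matrix.of fun x y =>
    ∑ z : ∀ i : {i : Fin d // (i : ℕ) < a ∨ b ≤ (i : ℕ)}, Fin (n i),
      p fun i =>
        if h1 : a ≤ (i : ℕ) ∧ (i : ℕ) < c then x ⟨i, h1⟩
        else if h2 : c ≤ (i : ℕ) ∧ (i : ℕ) < b then y ⟨i, h2⟩
        else z ⟨i, by omega⟩

/-- A (first-order) discrete Markov model: a probability density such that for all
`2 ≤ k ≤ d - 1` (1-based), `p(x) · p_k(x_k) = p_{1:k}(x_{1:k}) · p_{k:d}(x_{k:d})`. -/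
def IsMarkov {n : ℕ → ℕ} {d : ℕ} (p : PreIdx n d → ℝ) : Prop :=
  (∀ x, 0 ≤ p x) ∧ (∑ x : PreIdx n d, p x) = 1 ∧
    ∀ k : ℕ, 2 ≤ k → k ≤ d - 1 → ∀ x : PreIdx n d,
      p x * winMarg p (k - 1) k (fun i => x i.1) =
        winMarg p 0 k (fun i => x i.1) * winMarg p (k - 1) d (fun i => x i.1)

/-- An order-`m` discrete Markov model. -/
def IsMarkovOrder {n : ℕ → ℕ} {d : ℕ} (m : ℕ) (p : PreIdx n d → ℝ) : Prop :=
  (∀ x, 0 ≤ p x) ∧ (∑ x : PreIdx n d, p x) = 1 ∧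
    ∀ k : ℕ, m + 1 ≤ k → k ≤ d - 1 → ∀ x : PreIdx n d,
      p x * winMarg p (k - m) k (fun i => x i.1) =
        winMarg p 0 k (fun i => x i.1) * winMarg p (k - m) d (fun i => x i.1)

/-- Spectral norm (ℓ² → ℓ² operator norm) of a matrix. -/
noncomputable def specNorm {R C : Type*} [Fintype R] [Fintype C] [DecidableEq C]
    (M : Matrix R C ℝ) : ℝ :=
  ‖LinearMap.toContinuousLinearMap (Matrix.toEuclideanLin M)‖

/-- Moore–Penrose pseudoinverse of a full-column-rank matrix, `A⁺ = (AᵀA)⁻¹Aᵀ`. -/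
noncomputable def pinv {m n : ℕ} (A : Matrix (Fin m) (Fin n) ℝ) :
    Matrix (Fin n) (Fin m) ℝ :=
  (Aᵀ * A)⁻¹ * Aᵀ

/-- The norm `|||G|||`: max over the middle index of the spectral norm of the slices. -/
noncomputable def tnorm {a b c : ℕ} (G : Fin a → Fin b → Fin c → ℝ) : ℝ :=
  ⨆ i : Fin b, specNorm (Matrix.of fun x y => G x i y)

/-- Supremum norm of a 3-tensor. -/
noncomputable def supNorm3 {a b c : ℕ} (G : Fin a → Fin b → Fin c → ℝ) : ℝ :=
  ⨆ q : Fin a × Fin b × Fin c, |G q.1 q.2.1 q.2.2|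

/-- Supremum norm of a `d`-dimensional tensor. -/
noncomputable def supNormF {n : ℕ → ℕ} {d : ℕ} (f : PreIdx n d → ℝ) : ℝ :=
  ⨆ x : PreIdx n d, |f x|

/-- The reduced equations of TT-RS for a Markov model with identity sketches
(here `d = d₀ + 3`): `G_1 = B_1`; `Σ_{α_{k-1}} A_{k-1}(x_{k-1}, α_{k-1})
G_k(α_{k-1}, x_k, α_k) = B_k(x_{k-1}, x_k, α_k)` for `k = 2, …, d-1` with `A_1 = B_1`
and `A_k(x_k, α_k) = Σ_{x_{k-1}} B_k(x_{k-1}, x_k, α_k)`; and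
`Σ_{α_{d-1}} A_{d-1}(x_{d-1}, α_{d-1}) G_d(α_{d-1}, x_d) = p(x_{d-1}, x_d)`.
(0-based: `Bmid t` is the paper's `B_{t+2}`.) -/
def MarkovCDE (d₀ : ℕ) (n r : ℕ → ℕ) (p : PreIdx n (d₀ + 3) → ℝ)
    (B1 : Fin (n 0) → Fin (r 1) → ℝ)
    (Bmid : ∀ t : ℕ, Fin (n t) → Fin (n (t + 1)) → Fin (r (t + 2)) → ℝ)
    (G : CoreType n r (d₀ + 3)) : Prop :=
  (∀ (a : Fin (r 0)) (x : Fin (n 0)) (α : Fin (r 1)),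
      G ⟨0, by omega⟩ a x α = B1 x α) ∧
  (∀ (y : Fin (n 0)) (x : Fin (n 1)) (α : Fin (r 2)),
      (∑ c : Fin (r 1), B1 y c * G ⟨1, by omega⟩ c x α) = Bmid 0 y x α) ∧
  (∀ t : ℕ, ∀ _ht : t + 1 ≤ d₀,
      ∀ (y : Fin (n (t + 1))) (x : Fin (n (t + 2))) (α : Fin (r (t + 3))),
      (∑ c : Fin (r (t + 2)),
          (∑ w : Fin (n t), Bmid t w y c) * G ⟨t + 2, by omega⟩ c x α) =
        Bmid (t + 1) y x α) ∧
  (∀ (q : MidIdx n (d₀ + 3) (d₀ + 1) (d₀ + 3)) (b : Fin (r (d₀ + 3))),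
      (∑ c : Fin (r (d₀ + 2)),
          (∑ w : Fin (n d₀),
            Bmid d₀ w
              (q ⟨⟨d₀ + 1, by omega⟩, ⟨le_rfl, Nat.lt_succ_of_lt (Nat.lt_succ_self _)⟩⟩) c) *
            G ⟨d₀ + 2, by omega⟩ c
              (q ⟨⟨d₀ + 2, by omega⟩, ⟨Nat.le_succ _, Nat.lt_succ_self _⟩⟩) b) =
        winMarg p (d₀ + 1) (d₀ + 3) q)

/-! ### Auxiliary material for the proof -/

namespace MarkovAux

variable {n : ℕ → ℕ} {d : ℕ}

open Classical in
/-- Marginal of `p` on `[a, b)`, as a function of a full index. -/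
noncomputable def M (p : PreIdx n d → ℝ) (a b : ℕ) (x : PreIdx n d) : ℝ :=
  ∑ z : PreIdx n d, if (∀ i : Fin d, a ≤ (i : ℕ) → (i : ℕ) < b → z i = x i) then p z else 0

lemma M_congr (p : PreIdx n d → ℝ) {a b : ℕ} {x y : PreIdx n d}
    (h : ∀ i : Fin d, a ≤ (i : ℕ) → (i : ℕ) < b → x i = y i) : M p a b x = M p a b y := by
  unfold M
  refine Finset.sum_congr rfl fun z _ => ?_
  have : (∀ i : Fin d, a ≤ (i : ℕ) → (i : ℕ) < b → z i = x i) ↔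
      (∀ i : Fin d, a ≤ (i : ℕ) → (i : ℕ) < b → z i = y i) := by
    refine forall_congr' fun i => ?_
    refine forall_congr' fun h1 => forall_congr' fun h2 => ?_
    rw [h i h1 h2]
  simp only [this]

lemma M_nonneg {p : PreIdx n d → ℝ} (hp : ∀ x, 0 ≤ p x) (a b : ℕ) (x : PreIdx n d) :
    0 ≤ M p a b x := by
  unfold M
  refine Finset.sum_nonneg fun z _ => ?_
  split_ifs
  · exact hp z
  · exact le_rfl

lemma M_mono {p : PreIdx n d → ℝ} (hp : ∀ x, 0 ≤ p x) {a b a' b' : ℕ} (ha : a ≤ a')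
    (hb : b' ≤ b) (x : PreIdx n d) : M p a b x ≤ M p a' b' x := by
  unfold M
  refine Finset.sum_le_sum fun z _ => ?_
  split_ifs with h1 h2 h2
  · exact le_rfl
  · exact absurd (fun i hi hi' => h1 i (ha.trans hi) (hi'.trans_le hb)) h2
  · exact hp z
  · exact le_rfl

lemma M_eq_zero {p : PreIdx n d → ℝ} (hp : ∀ x, 0 ≤ p x) {a b a' b' : ℕ} (ha : a ≤ a')
    (hb : b' ≤ b) {x : PreIdx n d} (h : M p a' b' x = 0) : M p a b x = 0 :=
  le_antisymm (h ▸ M_mono hp ha hb x) (M_nonneg hp a b x)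

lemma M_full (p : PreIdx n d → ℝ) (x : PreIdx n d) : M p 0 d x = p x := by
  classical
  unfold M
  have : ∀ z : PreIdx n d, (∀ i : Fin d, 0 ≤ (i : ℕ) → (i : ℕ) < d → z i = x i) ↔ z = x := by
    intro z
    constructor
    · intro h; funext i; exact h i (Nat.zero_le _) i.isLt
    · rintro rfl; intros; rfl
  simp only [this]
  simp

lemma M_sum_right (p : PreIdx n d → ℝ) {a b : ℕ} (hab : a ≤ b) (hb : b < d) (x : PreIdx n d) :
    ∑ w : Fin (n b), M p a (b + 1) (Function.update x ⟨b, hb⟩ w) = M p a b x := by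
  classical
  unfold M
  rw [Finset.sum_comm]
  refine Finset.sum_congr rfl fun z _ => ?_
  have : ∀ w : Fin (n b), (∀ i : Fin d, a ≤ (i : ℕ) → (i : ℕ) < b + 1 →
      z i = Function.update x ⟨b, hb⟩ w i) ↔
      (w = z ⟨b, hb⟩ ∧ ∀ i : Fin d, a ≤ (i : ℕ) → (i : ℕ) < b → z i = x i) := by
    intro w
    constructor
    · intro h
      refine ⟨?_, fun i h1 h2 => ?_⟩
      · have := h ⟨b, hb⟩ hab (Nat.lt_succ_self _)
        rw [Function.update_self] at this
        exact this.symm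
      · have := h i h1 (by omega)
        rwa [Function.update_of_ne (by rintro rfl; simp at h2)] at this
    · rintro ⟨rfl, h⟩ i h1 h2
      by_cases hi : i = ⟨b, hb⟩
      · subst hi; rw [Function.update_self]
      · rw [Function.update_of_ne hi]
        refine h i h1 ?_
        have : (i : ℕ) ≠ b := fun h => hi (Fin.ext h)
        omega
  simp only [this]
  simp only [ite_and]
  simp

lemma M_sum_left (p : PreIdx n d → ℝ) {a b : ℕ} (hab : a < b) (ha : a < d) (x : PreIdx n d) :
    ∑ w : Fin (n a), M p a b (Function.update x ⟨a, ha⟩ w) = M p (a + 1) b x := by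
  classical
  unfold M
  rw [Finset.sum_comm]
  refine Finset.sum_congr rfl fun z _ => ?_
  have : ∀ w : Fin (n a), (∀ i : Fin d, a ≤ (i : ℕ) → (i : ℕ) < b →
      z i = Function.update x ⟨a, ha⟩ w i) ↔
      (w = z ⟨a, ha⟩ ∧ ∀ i : Fin d, a + 1 ≤ (i : ℕ) → (i : ℕ) < b → z i = x i) := by
    intro w
    constructor
    · intro h
      refine ⟨?_, fun i h1 h2 => ?_⟩
      · have := h ⟨a, ha⟩ le_rfl hab
        rw [Function.update_self] at this
        exact this.symm
      · have := h i (by omega) h2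
        rwa [Function.update_of_ne (by rintro rfl; simp at h1)] at this
    · rintro ⟨rfl, h⟩ i h1 h2
      by_cases hi : i = ⟨a, ha⟩
      · subst hi; rw [Function.update_self]
      · rw [Function.update_of_ne hi]
        refine h i ?_ h2
        have : (i : ℕ) ≠ a := fun h => hi (Fin.ext h)
        omega
  simp only [this]
  simp only [ite_and]
  simp

lemma winMarg_eq (p : PreIdx n d → ℝ) {a b : ℕ} (y : MidIdx n d a b) (x : PreIdx n d)
    (h : ∀ i, y i = x i.1) : winMarg p a b y = M p a b x := by
  classical
  unfold winMarg M
  rw [← Finset.sum_filter]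
  refine Finset.sum_bij' (fun z _ => fun i : Fin d =>
      if h : a ≤ (i : ℕ) ∧ (i : ℕ) < b then y ⟨i, h⟩ else z ⟨i, by omega⟩)
    (fun z _ => fun i => z i.1) ?_ ?_ ?_ ?_ ?_
  · intro z _
    simp only [Finset.mem_filter, Finset.mem_univ, true_and]
    intro i h1 h2
    rw [dif_pos ⟨h1, h2⟩, h]
  · intro z _; exact Finset.mem_univ _
  · intro z _
    funext i
    dsimp only
    rw [dif_neg (by have := i.2; omega)]
  · intro z hz
    simp only [Finset.mem_filter, Finset.mem_univ, true_and] at hz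
    funext i
    dsimp only
    split_ifs with h1
    · rw [h, hz i h1.1 h1.2]
    · rfl
  · intro z _; rfl

lemma winMatrix_eq (p : PreIdx n d → ℝ) {a c b : ℕ} (hac : a ≤ c) (hcb : c ≤ b)
    (u : MidIdx n d a c) (v : MidIdx n d c b) (x : PreIdx n d)
    (hu : ∀ i, u i = x i.1) (hv : ∀ i, v i = x i.1) : winMatrix p a c b u v = M p a b x := by
  rw [← winMarg_eq p (fun i => x i.1) x (fun _ => rfl)]
  unfold winMatrix winMarg
  rw [Matrix.of_apply]
  refine Finset.sum_congr rfl fun z _ => ?_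
  congr 1
  funext i
  split_ifs with h1 h2 h3 h4 h5
  · rw [hu]
  · omega
  · rw [hv]
  · omega
  · omega
  · rfl

lemma markov_base (d₀ : ℕ) {p : PreIdx n (d₀ + 3) → ℝ} (hp : IsMarkov p) (j : ℕ)
    (hj : j < d₀ + 3) (x : PreIdx n (d₀ + 3)) :
    M p 0 (d₀ + 3) x * M p j (j + 1) x = M p 0 (j + 1) x * M p j (d₀ + 3) x := by
  rcases Nat.eq_zero_or_pos j with rfl | h0
  · exact mul_comm _ _
  by_cases hl : j = d₀ + 2
  · subst hl; rfl
  have := hp.2.2 (j + 1) (by omega) (by omega) x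
  rw [winMarg_eq p _ x (fun _ => rfl), winMarg_eq p _ x (fun _ => rfl),
    winMarg_eq p _ x (fun _ => rfl)] at this
  rw [M_full]
  exact this

lemma markov_right (d₀ : ℕ) {p : PreIdx n (d₀ + 3) → ℝ} (hp : IsMarkov p) (j : ℕ)
    (hj : j < d₀ + 3) (e : ℕ) : ∀ b, b + e = d₀ + 3 → j < b → ∀ x : PreIdx n (d₀ + 3),
    M p 0 b x * M p j (j + 1) x = M p 0 (j + 1) x * M p j b x := by
  induction e with
  | zero =>
    intro b hb _ x
    obtain rfl : b = d₀ + 3 := by omega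
    exact markov_base d₀ hp j hj x
  | succ e ih =>
    intro b hb hjb x
    have hbd : b < d₀ + 3 := by omega
    rw [← M_sum_right p (Nat.zero_le b) hbd x, ← M_sum_right p hjb.le hbd x,
      Finset.sum_mul, Finset.mul_sum]
    refine Finset.sum_congr rfl fun w _ => ?_
    have hu : ∀ a c, c ≤ b → M p a c (Function.update x ⟨b, hbd⟩ w) = M p a c x := by
      intro a c hc
      refine M_congr p fun i _ h2 => ?_
      rw [Function.update_of_ne]
      rintro rfl
      simp at h2; omega
    have := ih (b + 1) (by omega) (by omega) (Function.update x ⟨b, hbd⟩ w)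
    rwa [hu j (j + 1) hjb, hu 0 (j + 1) hjb] at this

lemma markov_gen (d₀ : ℕ) {p : PreIdx n (d₀ + 3) → ℝ} (hp : IsMarkov p) (a : ℕ) :
    ∀ j b, a ≤ j → j < b → b ≤ d₀ + 3 → ∀ x : PreIdx n (d₀ + 3),
    M p a b x * M p j (j + 1) x = M p a (j + 1) x * M p j b x := by
  induction a with
  | zero =>
    intro j b _ hjb hb x
    exact markov_right d₀ hp j (by omega) (d₀ + 3 - b) b (by omega) hjb x
  | succ a ih =>
    intro j b haj hjb hb x
    have had : a < d₀ + 3 := by omega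
    rw [← M_sum_left p (by omega) had x, ← M_sum_left p (by omega) had x,
      Finset.sum_mul, Finset.sum_mul]
    refine Finset.sum_congr rfl fun w _ => ?_
    have hu : ∀ a' c, a < a' → M p a' c (Function.update x ⟨a, had⟩ w) = M p a' c x := by
      intro a' c hc
      refine M_congr p fun i h1 _ => ?_
      rw [Function.update_of_ne]
      rintro rfl
      simp at h1; omega
    have := ih j b (by omega) hjb hb (Function.update x ⟨a, had⟩ w)
    rwa [hu j (j + 1) haj, hu j b haj] at this

lemma markov_div (d₀ : ℕ) {p : PreIdx n (d₀ + 3) → ℝ} (hp : IsMarkov p) {a j b : ℕ}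
    (haj : a ≤ j) (hjb : j < b) (hb : b ≤ d₀ + 3) (x : PreIdx n (d₀ + 3)) :
    M p a b x = M p a (j + 1) x / M p j (j + 1) x * M p j b x := by
  by_cases h0 : M p j (j + 1) x = 0
  · rw [M_eq_zero hp.1 haj hjb h0, h0]; simp
  · have := markov_gen d₀ hp a j b haj hjb hb x
    field_simp
    exact this

/-- The matrices `A_k` of the reduced system. -/
noncomputable def A {r : ℕ → ℕ} (B1 : Fin (n 0) → Fin (r 1) → ℝ)
    (Bmid : ∀ t : ℕ, Fin (n t) → Fin (n (t + 1)) → Fin (r (t + 2)) → ℝ) :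
    (k : ℕ) → Fin (n k) → Fin (r (k + 1)) → ℝ
  | 0, y, α => B1 y α
  | t + 1, y, α => ∑ w : Fin (n t), Bmid t w y α

/-- Overwrite the coordinates in `[a, b)`. -/
def ext {a b : ℕ} (x : PreIdx n d) (v : MidIdx n d a b) : PreIdx n d :=
  fun i => if h : a ≤ (i : ℕ) ∧ (i : ℕ) < b then v ⟨i, h⟩ else x i

lemma exists_of_col_le {R C C' : Type*} [Fintype C] (N : Matrix R C ℝ) (N' : Matrix R C' ℝ)
    (h : colSpace N' ≤ colSpace N) (c' : C') :
    ∃ v : C → ℝ, ∀ q, N' q c' = ∑ c, N q c * v c := by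
  have h1 : (fun q => N' q c') ∈ colSpace N := h (Submodule.subset_span ⟨c', rfl⟩)
  obtain ⟨v, hv⟩ := (Submodule.mem_span_range_iff_exists_fun ℝ).1 h1
  refine ⟨v, fun q => ?_⟩
  have := congrFun hv q
  simp only [Finset.sum_apply, Pi.smul_apply, smul_eq_mul] at this
  rw [← this]
  exact Finset.sum_congr rfl fun _ _ => mul_comm _ _

section core

variable {d₀ : ℕ} {r : ℕ → ℕ} {p : PreIdx n (d₀ + 3) → ℝ}
    {B1 : Fin (n 0) → Fin (r 1) → ℝ}
    {Bmid : ∀ t : ℕ, Fin (n t) → Fin (n (t + 1)) → Fin (r (t + 2)) → ℝ}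

/-- Span hypothesis for `B_1`. -/
def SpanOne (d₀ : ℕ) (p : PreIdx n (d₀ + 3) → ℝ) (B1 : Fin (n 0) → Fin (r 1) → ℝ) : Prop :=
  colSpace (Matrix.of fun (q : MidIdx n (d₀ + 3) 0 1) (α : Fin (r 1)) =>
          B1 (q ⟨⟨0, by omega⟩, ⟨Nat.zero_le _, Nat.zero_lt_one⟩⟩) α) =
        colSpace (winMatrix p 0 1 2)

/-- Span hypothesis for the middle tensors. -/
def SpanMid (d₀ : ℕ) (p : PreIdx n (d₀ + 3) → ℝ)
    (Bmid : ∀ t : ℕ, Fin (n t) → Fin (n (t + 1)) → Fin (r (t + 2)) → ℝ) : Prop :=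
  ∀ t : ℕ, ∀ _ht : t ≤ d₀,
      colSpace (Matrix.of fun (q : MidIdx n (d₀ + 3) t (t + 2)) (α : Fin (r (t + 2))) =>
          Bmid t (q ⟨⟨t, by omega⟩, ⟨le_rfl, Nat.lt_succ_of_lt (Nat.lt_succ_self _)⟩⟩)
            (q ⟨⟨t + 1, by omega⟩, ⟨Nat.le_succ _, Nat.lt_succ_self _⟩⟩) α) =
        colSpace (winMatrix p t (t + 2) (t + 3))

lemma col_A (h1 : SpanOne d₀ p B1) (hm : SpanMid d₀ p Bmid) (k : ℕ) (hk : k < d₀ + 2)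
    (x : PreIdx n (d₀ + 3)) : ∃ v : Fin (r (k + 1)) → ℝ, ∀ y : Fin (n k),
      M p k (k + 2) (Function.update x ⟨k, by omega⟩ y) = ∑ α, A B1 Bmid k y α * v α := by
  cases k with
  | zero =>
    obtain ⟨v, hv⟩ := exists_of_col_le _ _ h1.ge (fun i => x i.1)
    refine ⟨v, fun y => ?_⟩
    have := hv (fun i => Function.update x ⟨0, by omega⟩ y i.1)
    rw [winMatrix_eq p (by omega) (by omega) _ _ (Function.update x ⟨0, by omega⟩ y)
      (fun _ => rfl) ?_] at this
    · rw [this]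
      refine Finset.sum_congr rfl fun α _ => ?_
      simp only [Matrix.of_apply, Function.update_self]
      rfl
    · intro i
      rw [Function.update_of_ne]
      intro h
      have h2 := i.2.1
      rw [h] at h2
      simp at h2
  | succ t =>
    obtain ⟨v, hv⟩ := exists_of_col_le _ _ (hm t (by omega)).ge (fun i => x i.1)
    refine ⟨v, fun y => ?_⟩
    rw [← M_sum_left p (by omega) (by omega : t < d₀ + 3)]
    simp only [A, Finset.sum_mul]
    rw [Finset.sum_comm]
    refine Finset.sum_congr rfl fun w _ => ?_
    set z := Function.update (Function.update x ⟨t + 1, by omega⟩ y) ⟨t, by omega⟩ w with hz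
    have := hv (fun i => z i.1)
    rw [winMatrix_eq p (by omega) (by omega) _ _ z (fun _ => rfl) ?_] at this
    · rw [this]
      refine Finset.sum_congr rfl fun α _ => ?_
      simp only [Matrix.of_apply, hz]
      rw [Function.update_self, Function.update_of_ne (by simp), Function.update_self]
    · intro i
      have h2 := i.2.1
      rw [hz, Function.update_of_ne, Function.update_of_ne]
      · intro h
        rw [h] at h2
        simp at h2
      · intro h
        rw [h] at h2
        simp at h2

lemma Bmid_eq (hp : IsMarkov p) (hm : SpanMid d₀ p Bmid) (t : ℕ) (ht : t ≤ d₀)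
    (x : PreIdx n (d₀ + 3)) (α : Fin (r (t + 2))) :
    Bmid t (x ⟨t, by omega⟩) (x ⟨t + 1, by omega⟩) α =
      M p t (t + 2) x / M p (t + 1) (t + 2) x *
        ∑ w : Fin (n t), Bmid t w (x ⟨t + 1, by omega⟩) α := by
  obtain ⟨c, hc⟩ := exists_of_col_le _ _ (hm t ht).le α
  have key : ∀ z : PreIdx n (d₀ + 3), Bmid t (z ⟨t, by omega⟩) (z ⟨t + 1, by omega⟩) α =
      ∑ v, M p t (t + 3) (ext z v) * c v := by
    intro z
    have := hc (fun i => z i.1)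
    simp only [Matrix.of_apply] at this
    rw [this]
    refine Finset.sum_congr rfl fun v _ => ?_
    rw [winMatrix_eq p (by omega) (by omega) _ _ (ext z v)]
    · intro i
      unfold ext
      rw [dif_neg (by have := i.2; omega)]
    · intro i
      unfold ext
      rw [dif_pos i.2]
  have hsum : ∑ w : Fin (n t), Bmid t w (x ⟨t + 1, by omega⟩) α =
      ∑ v, M p (t + 1) (t + 3) (ext x v) * c v := by
    have : ∀ w : Fin (n t), Bmid t w (x ⟨t + 1, by omega⟩) α =
        ∑ v, M p t (t + 3) (Function.update (ext x v) ⟨t, by omega⟩ w) * c v := by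
      intro w
      have := key (Function.update x ⟨t, by omega⟩ w)
      rw [Function.update_self, Function.update_of_ne (by simp)] at this
      rw [this]
      refine Finset.sum_congr rfl fun v _ => ?_
      congr 2
      funext i
      by_cases hi : i = ⟨t, by omega⟩
      · subst hi
        unfold ext
        rw [Function.update_self, dif_neg (by simp), Function.update_self]
      · rw [Function.update_of_ne hi]
        unfold ext
        rw [Function.update_of_ne hi]
    simp only [this]
    rw [Finset.sum_comm]
    refine Finset.sum_congr rfl fun v _ => ?_
    rw [← Finset.sum_mul, M_sum_left p (by omega)]
  rw [hsum, key, Finset.mul_sum]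
  refine Finset.sum_congr rfl fun v _ => ?_
  rw [markov_div d₀ hp (by omega : t ≤ t + 1) (by omega) (by omega) (ext x v), ← mul_assoc]
  have hx : ∀ i : Fin (d₀ + 3), (i : ℕ) < t + 2 → ext x v i = x i := by
    intro i hi
    unfold ext
    rw [dif_neg (by omega)]
  rw [M_congr p (a := t) (b := t + 1 + 1) (fun i _ h => hx i h),
    M_congr p (a := t + 1) (b := t + 1 + 1) (fun i _ h => hx i h)]

lemma B1_zero (hp : IsMarkov p) (h1 : SpanOne d₀ p B1)
    (x : PreIdx n (d₀ + 3)) (h0 : M p 0 1 x = 0) (α : Fin (r 1)) :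
    B1 (x ⟨0, by omega⟩) α = 0 := by
  obtain ⟨c, hc⟩ := exists_of_col_le _ _ h1.le α
  have := hc (fun i => x i.1)
  simp only [Matrix.of_apply] at this
  rw [this]
  refine Finset.sum_eq_zero fun v _ => ?_
  rw [winMatrix_eq p (by omega) (by omega) _ _ (ext x v)]
  · rw [M_eq_zero hp.1 (le_refl 0) (by omega : 1 ≤ 2), zero_mul]
    rw [← h0]
    refine M_congr p fun i _ h => ?_
    unfold ext
    rw [dif_neg (by omega)]
  · intro i
    unfold ext
    rw [dif_neg (by have := i.2; omega)]
  · intro i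
    unfold ext
    rw [dif_pos i.2]

lemma A_inj (hp : IsMarkov p) (x0 : PreIdx n (d₀ + 3))
    (hrank : ∀ k, 1 ≤ k → k ≤ d₀ + 2 → mrank (unfold p k) = r k)
    (h1 : SpanOne d₀ p B1) (hm : SpanMid d₀ p Bmid) (k : ℕ) (hk : k < d₀ + 2)
    (v : Fin (r (k + 1)) → ℝ) (hv : ∀ y, ∑ α, A B1 Bmid k y α * v α = 0) : v = 0 := by
  let g : PreIdx n (k + 1) → PreIdx n (d₀ + 3) := fun u => glue u (fun i => x0 i.1)
  let Φ : (Fin (r (k + 1)) → ℝ) →ₗ[ℝ] (PreIdx n (k + 1) → ℝ) :=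
    { toFun := fun v u => M p 0 (k + 1) (g u) / M p k (k + 1) (g u) *
        ∑ α, A B1 Bmid k (u (Fin.last k)) α * v α
      map_add' := by
        intro a b; funext u
        simp only [Pi.add_apply, mul_add, Finset.sum_add_distrib]
      map_smul' := by
        intro a b; funext u
        simp only [Pi.smul_apply, smul_eq_mul, RingHom.id_apply, Finset.mul_sum]
        refine Finset.sum_congr rfl fun _ _ => ?_
        ring }
  have hle : colSpace (unfold p (k + 1)) ≤ LinearMap.range Φ := by
    refine Submodule.span_le.2 ?_
    rintro _ ⟨y, rfl⟩
    obtain ⟨c, hc⟩ := col_A h1 hm k hk (glue (fun i : Fin (k + 1) => x0 ⟨i, by omega⟩) y)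
    set z0 := glue (fun i : Fin (k + 1) => x0 ⟨i, by omega⟩) y with hz0
    let s := M p (k + 1) (d₀ + 3) z0 / M p (k + 1) (k + 2) z0
    refine ⟨fun α => c α * s, ?_⟩
    funext u
    change M p 0 (k + 1) (g u) / M p k (k + 1) (g u) *
        ∑ α, A B1 Bmid k (u (Fin.last k)) α * (c α * s) = p (glue u y)
    simp only [← mul_assoc]
    rw [← Finset.sum_mul, ← hc, ← M_full p (glue u y),
      markov_div d₀ hp (Nat.zero_le k) (by omega) le_rfl (glue u y),
      markov_div d₀ hp (by omega : k ≤ k + 1) (by omega) le_rfl (glue u y)]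
    have e1 : ∀ a, M p a (k + 1) (g u) = M p a (k + 1) (glue u y) := by
      intro a
      refine M_congr p fun i _ h => ?_
      simp only [g, glue]
      rw [dif_pos h, dif_pos h]
    have e2 : ∀ b, M p (k + 1) b z0 = M p (k + 1) b (glue u y) := by
      intro b
      refine M_congr p fun i h _ => ?_
      simp only [z0, glue]
      rw [dif_neg (by omega), dif_neg (by omega)]
    have hkd : k < d₀ + 3 := by omega
    have e3 : M p k (k + 2) (Function.update z0 ⟨k, by omega⟩ (u (Fin.last k))) =
        M p k (k + 2) (glue u y) := by
      refine M_congr p fun i h _ => ?_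
      by_cases hi : i = ⟨k, hkd⟩
      · subst hi
        rw [Function.update_self]
        simp only [glue]
        rw [dif_pos (by simp)]
        rfl
      · have : (i : ℕ) ≠ k := fun h => hi (Fin.ext h)
        rw [Function.update_of_ne hi]
        simp only [z0, glue]
        rw [dif_neg (by omega), dif_neg (by omega)]
    simp only [s]
    rw [e1, e1, e2, e2, e3]
    ring
  have hfin : r (k + 1) ≤ Module.finrank ℝ (LinearMap.range Φ) := by
    have := Submodule.finrank_mono hle
    exact (hrank (k + 1) (by omega) (by omega)).ge.trans this
  have hrn := LinearMap.finrank_range_add_finrank_ker Φ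
  rw [Module.finrank_fin_fun] at hrn
  have hker : LinearMap.ker Φ = ⊥ := Submodule.finrank_eq_zero.1 (by omega)
  have : v ∈ LinearMap.ker Φ := by
    rw [LinearMap.mem_ker]
    funext u
    change _ * ∑ α, A B1 Bmid k (u (Fin.last k)) α * v α = 0
    rw [hv, mul_zero]
  rw [hker] at this
  exact (Submodule.mem_bot ℝ).1 this

/-- Overwrite coordinates `j` and `j + 1`. -/
def up (x0 : PreIdx n (d₀ + 3)) (j : ℕ) (h : j + 1 < d₀ + 3) (y : Fin (n j))
    (x : Fin (n (j + 1))) : PreIdx n (d₀ + 3) :=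
  Function.update (Function.update x0 ⟨j + 1, h⟩ x) ⟨j, by omega⟩ y

lemma up_left (x0 : PreIdx n (d₀ + 3)) (j : ℕ) (h : j + 1 < d₀ + 3) (y : Fin (n j))
    (x : Fin (n (j + 1))) : up x0 j h y x ⟨j, by omega⟩ = y := by
  unfold up
  rw [Function.update_self]

lemma up_right (x0 : PreIdx n (d₀ + 3)) (j : ℕ) (h : j + 1 < d₀ + 3) (y : Fin (n j))
    (x : Fin (n (j + 1))) : up x0 j h y x ⟨j + 1, h⟩ = x := by
  unfold up
  rw [Function.update_of_ne (by simp), Function.update_self]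

/-- Uniform right-hand side of the reduced equations. -/
noncomputable def Rhs (p : PreIdx n (d₀ + 3) → ℝ)
    (Bmid : ∀ t : ℕ, Fin (n t) → Fin (n (t + 1)) → Fin (r (t + 2)) → ℝ)
    (x0 : PreIdx n (d₀ + 3)) (j : ℕ) (h : j + 1 < d₀ + 3) (y : Fin (n j))
    (x : Fin (n (j + 1))) (α : Fin (r (j + 2))) : ℝ :=
  if j ≤ d₀ then Bmid j y x α else M p j (j + 2) (up x0 j h y x)

lemma CDE_iff (x0 : PreIdx n (d₀ + 3)) (G : CoreType n r (d₀ + 3)) :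
    MarkovCDE d₀ n r p B1 Bmid G ↔
      ((∀ (a : Fin (r 0)) (x : Fin (n 0)) (α : Fin (r 1)),
        G ⟨0, by omega⟩ a x α = B1 x α) ∧
      ∀ (j : ℕ) (h : j + 1 < d₀ + 3) (y : Fin (n j)) (x : Fin (n (j + 1)))
        (α : Fin (r (j + 2))),
        ∑ c : Fin (r (j + 1)), A B1 Bmid j y c * G ⟨j + 1, h⟩ c x α =
          Rhs p Bmid x0 j h y x α) := by
  have hq : ∀ q : MidIdx n (d₀ + 3) (d₀ + 1) (d₀ + 3),
      winMarg p (d₀ + 1) (d₀ + 3) q = M p (d₀ + 1) (d₀ + 3) (up x0 (d₀ + 1) (by omega)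
        (q ⟨⟨d₀ + 1, by omega⟩, ⟨le_rfl, Nat.lt_succ_of_lt (Nat.lt_succ_self _)⟩⟩)
        (q ⟨⟨d₀ + 2, by omega⟩, ⟨Nat.le_succ _, Nat.lt_succ_self _⟩⟩)) := by
    intro q
    refine winMarg_eq p _ _ ?_
    rintro ⟨⟨i, hi⟩, h1, h2⟩
    simp only at h1 h2
    have : i = d₀ + 1 ∨ i = d₀ + 2 := by omega
    rcases this with rfl | rfl
    · rw [up_left]
    · exact (up_right _ _ _ _ _).symm
  constructor
  · rintro ⟨c1, c2, c3, c4⟩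
    refine ⟨c1, ?_⟩
    intro j h y x α
    unfold Rhs
    split_ifs with hj
    · cases j with
      | zero => exact c2 y x α
      | succ t => exact c3 t hj y x α
    · obtain rfl : j = d₀ + 1 := by omega
      have := c4 (fun i => up x0 (d₀ + 1) h y x i.1) α
      rw [winMarg_eq p _ (up x0 (d₀ + 1) h y x) (fun _ => rfl)] at this
      rw [← this]
      refine Finset.sum_congr rfl fun c _ => ?_
      simp only [A]
      rw [up_left]
      congr 2
      exact (up_right x0 (d₀ + 1) h y x).symm
  · rintro ⟨c1, c2⟩
    refine ⟨c1, ?_, ?_, ?_⟩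
    · intro y x α
      have := c2 0 (by omega) y x α
      rw [Rhs, if_pos (Nat.zero_le _)] at this
      exact this
    · intro t ht y x α
      have := c2 (t + 1) (by omega) y x α
      rw [Rhs, if_pos ht] at this
      exact this
    · intro q b
      have := c2 (d₀ + 1) (by omega)
        (q ⟨⟨d₀ + 1, by omega⟩, ⟨le_rfl, Nat.lt_succ_of_lt (Nat.lt_succ_self _)⟩⟩)
        (q ⟨⟨d₀ + 2, by omega⟩, ⟨Nat.le_succ _, Nat.lt_succ_self _⟩⟩) b
      rw [Rhs, if_neg (by omega)] at this
      rw [hq]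
      exact this

lemma Rhs_solvable (hp : IsMarkov p) (x0 : PreIdx n (d₀ + 3))
    (h1 : SpanOne d₀ p B1) (hm : SpanMid d₀ p Bmid) (j : ℕ) (h : j + 1 < d₀ + 3) :
    ∃ g : Fin (r (j + 1)) → Fin (n (j + 1)) → Fin (r (j + 2)) → ℝ,
      ∀ y x α, ∑ c : Fin (r (j + 1)), A B1 Bmid j y c * g c x α = Rhs p Bmid x0 j h y x α := by
  have key : ∀ (x : Fin (n (j + 1))) (α : Fin (r (j + 2))), ∃ s : ℝ, ∀ y,
      Rhs p Bmid x0 j h y x α = M p j (j + 2) (up x0 j h y x) * s := by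
    intro x α
    unfold Rhs
    by_cases hj : j ≤ d₀
    · simp only [if_pos hj]
      refine ⟨(∑ w : Fin (n j), Bmid j w x α) /
        M p (j + 1) (j + 2) (Function.update x0 ⟨j + 1, h⟩ x), fun y => ?_⟩
      have := Bmid_eq hp hm j hj (up x0 j h y x) α
      rw [up_left, up_right] at this
      rw [this, M_congr p (a := j + 1) (b := j + 2) (x := up x0 j h y x)
        (y := Function.update x0 ⟨j + 1, h⟩ x)]
      · ring
      · intro i hi _
        unfold up
        rw [Function.update_of_ne]
        rintro rfl
        simp at hi
    · simp only [if_neg hj]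
      exact ⟨1, fun y => (mul_one _).symm⟩
  choose s hs using key
  have hc := fun x : Fin (n (j + 1)) =>
    col_A (Bmid := Bmid) h1 hm j (by omega) (Function.update x0 ⟨j + 1, h⟩ x)
  choose v hv using hc
  refine ⟨fun c x α => v x c * s x α, fun y x α => ?_⟩
  rw [hs]
  unfold up
  rw [hv, Finset.sum_mul]
  exact Finset.sum_congr rfl fun _ _ => (mul_assoc _ _ _).symm

lemma prefix_eq (hp : IsMarkov p) (x0 : PreIdx n (d₀ + 3)) (hr0 : r 0 = 1)
    (h1 : SpanOne d₀ p B1) (hm : SpanMid d₀ p Bmid) (G : CoreType n r (d₀ + 3))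
    (hG : MarkovCDE d₀ n r p B1 Bmid G) (x : PreIdx n (d₀ + 3)) (a : Fin (r 0)) (k : ℕ) :
    ∀ (hk : k < d₀ + 2) (b : Fin (r (k + 1))),
    ttPrefixF G (k + 1) (by omega) (fun i => x ⟨i, by omega⟩) a b =
      M p 0 (k + 1) x / M p k (k + 1) x * A B1 Bmid k (x ⟨k, by omega⟩) b := by
  have hG' := (CDE_iff x0 G).1 hG
  induction k with
  | zero =>
    intro hk b
    have e : ∀ c : Fin (r 0), (a : ℕ) = (c : ℕ) := by
      intro c
      have := a.isLt
      have := c.isLt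
      omega
    simp only [ttPrefixF]
    have e2 : ∀ c ∈ (Finset.univ : Finset (Fin (r 0))), (if (a : ℕ) = (c : ℕ) then (1 : ℝ) else 0) *
        G ⟨0, by omega⟩ c (x ⟨((Fin.last 0 : Fin 1) : ℕ), by simp⟩) b =
        B1 (x ⟨0, by omega⟩) b := by
      intro c _
      rw [if_pos (e c), one_mul]
      exact hG'.1 c _ b
    refine (Finset.sum_congr rfl e2).trans ?_
    simp only [Finset.sum_const, Finset.card_univ, Fintype.card_fin, hr0, one_smul, A]
    by_cases h0 : M p 0 (0 + 1) x = 0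
    · rw [h0, div_zero, zero_mul]
      exact B1_zero hp h1 x h0 b
    · rw [div_self h0, one_mul]
  | succ k ih =>
    intro hk b
    rw [ttPrefixF]
    have hpre : ∀ c, ttPrefixF G (k + 1) (by omega)
        (takePre (fun i : Fin (k + 1 + 1) => x ⟨i, by omega⟩)) a c =
        M p 0 (k + 1) x / M p k (k + 1) x * A B1 Bmid k (x ⟨k, by omega⟩) c :=
      fun c => ih (by omega) c
    simp only [hpre, mul_assoc]
    rw [← Finset.mul_sum]
    have := hG'.2 k (by omega) (x ⟨k, by omega⟩) (x ⟨k + 1, by omega⟩) b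
    rw [Rhs, if_pos (by omega)] at this
    refine (congrArg (fun t => M p 0 (k + 1) x / M p k (k + 1) x * t) this).trans ?_
    rw [Bmid_eq hp hm k (by omega) x b, markov_div d₀ hp (Nat.zero_le k)
      (by omega : k < k + 1 + 1) (by omega) x]
    simp only [A]
    ring

end core

end MarkovAux

/-- Theorem: exact recovery of TT-RS for Markov models.
Let `p` be a discrete Markov model (`d = d₀ + 3 ≥ 3`) whose `k`-th unfolding matrix has
rank `r_k`.  Let `B_1` have orthonormal columns spanning the column space of the
pair-marginal matrix `p(x_1; x_2)`, for `2 ≤ k ≤ d-1` let `B_k` have orthonormal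
columns spanning the column space of the triple-marginal matrix
`p((x_{k-1}, x_k); x_{k+1})`, and let `B_d` be the pair marginal `p(x_{d-1}, x_d)`.
Then each of the reduced equations has a unique solution, and the solutions are
cores of a tensor-train representation of `p` of rank `(r_1, …, r_{d-1})`. -/
theorem markov_ttrs_exact_recovery
    (d₀ : ℕ) (n r : ℕ → ℕ) (hr0 : r 0 = 1) (hrd : r (d₀ + 3) = 1)
    (p : PreIdx n (d₀ + 3) → ℝ) (hp : IsMarkov p)
    (hrank : ∀ k, 1 ≤ k → k ≤ d₀ + 2 → mrank (unfold p k) = r k)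
    (B1 : Fin (n 0) → Fin (r 1) → ℝ)
    (hB1ortho : (Matrix.of B1)ᵀ * Matrix.of B1 = 1)
    (hB1span :
      colSpace (Matrix.of fun (q : MidIdx n (d₀ + 3) 0 1) (α : Fin (r 1)) =>
          B1 (q ⟨⟨0, by omega⟩, ⟨Nat.zero_le _, Nat.zero_lt_one⟩⟩) α) =
        colSpace (winMatrix p 0 1 2))
    (Bmid : ∀ t : ℕ, Fin (n t) → Fin (n (t + 1)) → Fin (r (t + 2)) → ℝ)
    (hBmidortho : ∀ t : ℕ, ∀ _ht : t ≤ d₀,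
      (Matrix.of fun (q : Fin (n t) × Fin (n (t + 1))) (α : Fin (r (t + 2))) =>
          Bmid t q.1 q.2 α)ᵀ *
        (Matrix.of fun (q : Fin (n t) × Fin (n (t + 1))) (α : Fin (r (t + 2))) =>
          Bmid t q.1 q.2 α) = 1)
    (hBmidspan : ∀ t : ℕ, ∀ _ht : t ≤ d₀,
      colSpace (Matrix.of fun (q : MidIdx n (d₀ + 3) t (t + 2)) (α : Fin (r (t + 2))) =>
          Bmid t (q ⟨⟨t, by omega⟩, ⟨le_rfl, Nat.lt_succ_of_lt (Nat.lt_succ_self _)⟩⟩)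
            (q ⟨⟨t + 1, by omega⟩, ⟨Nat.le_succ _, Nat.lt_succ_self _⟩⟩) α) =
        colSpace (winMatrix p t (t + 2) (t + 3))) :
    (∃! G : CoreType n r (d₀ + 3), MarkovCDE d₀ n r p B1 Bmid G) ∧
      ∀ G : CoreType n r (d₀ + 3), MarkovCDE d₀ n r p B1 Bmid G →
        ∀ x, p x = ttContract G x := by
  have h1 : MarkovAux.SpanOne d₀ p B1 := hB1span
  have hm : MarkovAux.SpanMid d₀ p Bmid := hBmidspan
  obtain ⟨x0⟩ : Nonempty (PreIdx n (d₀ + 3)) := by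
    by_contra hne
    have := not_nonempty_iff.1 hne
    have h := hp.2.1
    rw [Finset.univ_eq_empty, Finset.sum_empty] at h
    exact zero_ne_one h
  refine ⟨?_, ?_⟩
  · have hs := fun (j : ℕ) (h : j + 1 < d₀ + 3) =>
      MarkovAux.Rhs_solvable (r := r) hp x0 h1 hm j h
    choose g hg using hs
    refine ⟨fun k => match k with
      | ⟨0, _⟩ => fun _ x α => B1 x α
      | ⟨j + 1, h⟩ => g j h, ?_, ?_⟩
    · refine (MarkovAux.CDE_iff x0 _).2 ⟨fun _ _ _ => rfl, fun j h y x α => hg j h y x α⟩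
    · intro G hG
      have hG' := (MarkovAux.CDE_iff x0 G).1 hG
      funext k
      obtain ⟨k, hk⟩ := k
      cases k with
      | zero =>
        funext a x α
        exact hG'.1 a x α
      | succ j =>
        funext c x α
        have := MarkovAux.A_inj hp x0 hrank h1 hm j (by omega)
          (fun c => G ⟨j + 1, hk⟩ c x α - g j hk c x α) ?_
        · exact sub_eq_zero.1 (congrFun this c)
        · intro y
          simp only [mul_sub, Finset.sum_sub_distrib]
          rw [hg j hk y x α]
          exact sub_eq_zero.2 (hG'.2 j hk y x α)
  · intro G hG x
    have hG' := (MarkovAux.CDE_iff x0 G).1 hG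
    have key : ∀ a b, ttPrefixF G (d₀ + 3) le_rfl x a b = p x := by
      intro a b
      rw [ttPrefixF]
      have hpre : ∀ c, ttPrefixF G (d₀ + 2) (by omega) (takePre x) a c = _ :=
        fun c => MarkovAux.prefix_eq hp x0 hr0 h1 hm G hG x a (d₀ + 1) (by omega) c
      simp only [hpre, mul_assoc]
      rw [← Finset.mul_sum]
      have := hG'.2 (d₀ + 1) (by omega) (x ⟨d₀ + 1, by omega⟩) (x ⟨d₀ + 2, by omega⟩) b
      rw [MarkovAux.Rhs, if_neg (by omega)] at this
      refine (congrArg (fun t => MarkovAux.M p 0 (d₀ + 1 + 1) x /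
        MarkovAux.M p (d₀ + 1) (d₀ + 1 + 1) x * t) this).trans ?_
      rw [MarkovAux.M_congr p (a := d₀ + 1) (b := d₀ + 1 + 2) (y := x),
        ← MarkovAux.markov_div d₀ hp (Nat.zero_le _) (by omega) (by omega),
        MarkovAux.M_full]
      rintro ⟨i, hi⟩ h2 h3
      simp only at h2 h3
      have : i = d₀ + 1 ∨ i = d₀ + 1 + 1 := by omega
      rcases this with rfl | rfl
      · rw [MarkovAux.up_left]
      · exact MarkovAux.up_right _ _ _ _ _
    unfold ttContract
    simp only [key, Finset.sum_const, Finset.card_univ, Fintype.card_fin, hr0, hrd, one_smul]
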